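/- Let n, t be positive integers, V = (Fin n → ZMod 2), S ⊆ V a Sidon set, and w ∈ V. Let T₁, …, T_t be pairwise distinct subsets of S, each of cardinality 3 and each with element-sum ∑_{x ∈ Tᵢ} x = w (a w-centered gerbera configuration of size t contained in S). Then: (i) the leaves are pairwise disjoint, i.e. Tᵢ ∩ Tⱼ = ∅ for i ≠ j; and (ii) the affine span of T₁ ∪ ⋯ ∪ T_t has dimension at most 2t, i.e. the 𝔽₂-dimension of the vector span of the differences of points of ⋃ᵢ Tᵢ is at most 2t. -/

import Mathlib

/-!
Removing a common point from two leaves with the same sum leaves two pairs with the same sum, which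
coincide in a Sidon set; hence distinct leaves are disjoint. For the dimension bound, in
characteristic two the sum `a + b + c = w` of a leaf is an *affine* combination of its points, since
its coefficients add up to `3 = 1`. So the affine spans of the leaves are subspaces of dimension at
most two through the common point `w`, and the direction of their join is the sum of their
directions.
-/

open Module

/-- A Sidon set: any coincidence `x + y = z + w` between sums of two elements involves at most two
distinct elements. The coincidences `x + x = y + y` are allowed, so that the notion is meaningful
in characteristic two. -/
def IsSidon {V : Type*} [Add V] (S : Set V) : Prop :=
  ∀ x ∈ S, ∀ y ∈ S, ∀ z ∈ S, ∀ w ∈ S, x + y = z + w → ({x, y, z, w} : Set V).ncard ≤ 2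

namespace IsSidon

theorem eq_of_card_eq_two_of_sum_eq {V : Type*} [AddCommMonoid V] {S : Set V} (hS : IsSidon S)
    {A B : Finset V} (hAS : ↑A ⊆ S) (hBS : ↑B ⊆ S) (hA : A.card = 2) (hB : B.card = 2)
    (hsum : ∑ x ∈ A, x = ∑ x ∈ B, x) : A = B := by
  classical
  have hunion : (A ∪ B).card ≤ 2 := by
    obtain ⟨a, b, hab, rfl⟩ := Finset.card_eq_two.mp hA
    obtain ⟨c, d, hcd, rfl⟩ := Finset.card_eq_two.mp hB
    rw [Finset.sum_pair hab, Finset.sum_pair hcd] at hsum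
    have hncard := hS a (hAS (by simp)) b (hAS (by simp)) c (hBS (by simp)) d (hBS (by simp)) hsum
    rw [← Set.ncard_coe_finset]
    simpa only [Finset.coe_union, Finset.coe_pair, Set.insert_union, Set.singleton_union]
      using hncard
  calc A = A ∪ B := Finset.eq_of_subset_of_card_le Finset.subset_union_left (hA ▸ hunion)
    _ = B := (Finset.eq_of_subset_of_card_le Finset.subset_union_right (hB ▸ hunion)).symm

theorem disjoint_of_card_eq_three_of_sum_eq {V : Type*} [AddCancelCommMonoid V] {S : Set V}
    (hS : IsSidon S) {A B : Finset V} (hAS : ↑A ⊆ S) (hBS : ↑B ⊆ S)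
    (hA : A.card = 3) (hB : B.card = 3) (hsum : ∑ x ∈ A, x = ∑ x ∈ B, x) (hne : A ≠ B) :
    Disjoint A B := by
  classical
  refine Finset.disjoint_left.mpr fun x hxA hxB => hne ?_
  have hsum_erase : ∑ y ∈ A.erase x, y = ∑ y ∈ B.erase x, y := by
    rw [← Finset.add_sum_erase A _ hxA, ← Finset.add_sum_erase B _ hxB] at hsum
    exact add_left_cancel hsum
  have herase : A.erase x = B.erase x :=
    hS.eq_of_card_eq_two_of_sum_eq
      ((Finset.coe_subset.mpr (A.erase_subset x)).trans hAS)
      ((Finset.coe_subset.mpr (B.erase_subset x)).trans hBS)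
      (by rw [Finset.card_erase_of_mem hxA, hA]) (by rw [Finset.card_erase_of_mem hxB, hB])
      hsum_erase
  rw [← Finset.insert_erase hxA, herase, Finset.insert_erase hxB]

end IsSidon

theorem sum_mem_affineSpan_of_card_cast_eq_one {R V : Type*} [Ring R] [Nontrivial R]
    [AddCommGroup V] [Module R V] {A : Finset V} (hA : (A.card : R) = 1) :
    ∑ x ∈ A, x ∈ affineSpan R (A : Set V) := by
  have hweights : ∑ _x ∈ A, (1 : R) = 1 := by rw [Finset.sum_const, nsmul_one, hA]
  have hmem := affineCombination_mem_affineSpan_image (s' := (A : Set V)) hweights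
    (fun x hxA hx => absurd hxA hx) id
  simpa only [Finset.affineCombination_eq_linear_combination _ _ _ hweights, one_smul, id,
    Set.image_id'] using hmem

theorem vectorSpan_eq_span_sub {R V : Type*} [Ring R] [AddCommGroup V] [Module R V] (s : Set V) :
    vectorSpan R s = Submodule.span R {v | ∃ p ∈ s, ∃ q ∈ s, v = p - q} := by
  refine congrArg (Submodule.span R) (Set.ext fun v => ?_)
  simp only [Set.mem_vsub, vsub_eq_sub, Set.mem_ofPred_eq, eq_comm]

theorem vectorSpan_iUnion_of_mem_affineSpan {ι R V P : Type*} [Ring R] [AddCommGroup V]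
    [Module R V] [AddTorsor V P] {s : ι → Set P} {c : P} (hc : ∀ i, c ∈ affineSpan R (s i)) :
    vectorSpan R (⋃ i, s i) = ⨆ i, vectorSpan R (s i) := by
  refine le_antisymm ?_ (iSup_le fun i => vectorSpan_mono R (Set.subset_iUnion s i))
  have hle : affineSpan R (⋃ i, s i) ≤ AffineSubspace.mk' c (⨆ i, vectorSpan R (s i)) := by
    refine affineSpan_le.mpr (Set.iUnion_subset fun i p hp => ?_)
    exact Submodule.mem_iSup_of_mem i
      (vsub_mem_vectorSpan_of_mem_affineSpan_of_mem_affineSpan (mem_affineSpan R hp) (hc i))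
  simpa only [direction_affineSpan, AffineSubspace.direction_mk']
    using AffineSubspace.direction_le hle

theorem finrank_finset_sup_le {ι K V : Type*} [DivisionRing K] [AddCommGroup V] [Module K V]
    (s : Finset ι) (W : ι → Submodule K V) [∀ i, FiniteDimensional K (W i)] :
    finrank K ↥(s.sup W) ≤ ∑ i ∈ s, finrank K (W i) := by
  classical
  induction s using Finset.induction_on with
  | empty => simp
  | insert i s hi ih =>
    rw [Finset.sup_insert, Finset.sum_insert hi]
    calc finrank K ↥(W i ⊔ s.sup W) ≤ finrank K (W i) + finrank K ↥(s.sup W) :=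
          Submodule.finrank_add_le_finrank_add_finrank _ _
      _ ≤ finrank K (W i) + ∑ j ∈ s, finrank K (W j) := by gcongr

theorem finrank_vectorSpan_iUnion_le {ι K V P : Type*} [Fintype ι] [DivisionRing K]
    [AddCommGroup V] [Module K V] [AddTorsor V P] {T : ι → Finset P} {c : P} {m : ℕ}
    (hc : ∀ i, c ∈ affineSpan K (T i : Set P)) (hcard : ∀ i, (T i).card = m + 1) :
    finrank K (vectorSpan K (⋃ i, (T i : Set P))) ≤ m * Fintype.card ι := by
  classical
  have hdim (i : ι) : finrank K (vectorSpan K (T i : Set P)) ≤ m := by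
    have himage := finrank_vectorSpan_image_finset_le K id (T i) (hcard i)
    rwa [Finset.image_id] at himage
  have (i : ι) : FiniteDimensional K (vectorSpan K (T i : Set P)) :=
    finiteDimensional_vectorSpan_of_finite K (T i).finite_toSet
  rw [vectorSpan_iUnion_of_mem_affineSpan hc, ← Finset.sup_univ_eq_iSup]
  calc finrank K ↥(Finset.univ.sup fun i => vectorSpan K (T i : Set P))
      ≤ ∑ i, finrank K (vectorSpan K (T i : Set P)) := finrank_finset_sup_le _ _
    _ ≤ ∑ _i : ι, m := Finset.sum_le_sum fun i _ => hdim i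
    _ = m * Fintype.card ι := by simp [mul_comm]

theorem gerbera_disjoint_leaves_and_span_bound_general {ι K V : Type*} [Fintype ι]
    [DivisionRing K] [CharP K 2] [AddCommGroup V] [Module K V] {S : Set V} (hS : IsSidon S)
    {w : V} {T : ι → Finset V} (hTinj : Function.Injective T) (hTS : ∀ i, ↑(T i) ⊆ S)
    (hTcard : ∀ i, (T i).card = 3) (hTsum : ∀ i, ∑ x ∈ T i, x = w) :
    (∀ i j, i ≠ j → Disjoint (T i) (T j)) ∧
      finrank K (vectorSpan K (⋃ i, (T i : Set V))) ≤ 2 * Fintype.card ι := by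
  have hcenter (i : ι) : w ∈ affineSpan K (T i : Set V) := by
    have hodd : ((T i).card : K) = 1 := by rw [hTcard, CharTwo.natCast_eq_mod, Nat.cast_one]
    exact hTsum i ▸ sum_mem_affineSpan_of_card_cast_eq_one hodd
  refine ⟨fun i j hij => ?_, finrank_vectorSpan_iUnion_le hcenter hTcard⟩
  exact hS.disjoint_of_card_eq_three_of_sum_eq (hTS i) (hTS j) (hTcard i) (hTcard j)
    ((hTsum i).trans (hTsum j).symm) (hTinj.ne hij)

theorem gerbera_disjoint_leaves_and_span_bound
    (n t : ℕ) (hn : 0 < n) (ht : 0 < t)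
    (S : Set (Fin n → ZMod 2))
    (hS : ∀ x ∈ S, ∀ y ∈ S, ∀ z ∈ S, ∀ w ∈ S, x + y = z + w →
      ({x, y, z, w} : Set (Fin n → ZMod 2)).ncard ≤ 2)
    (w : Fin n → ZMod 2)
    (T : Fin t → Finset (Fin n → ZMod 2))
    (hTinj : Function.Injective T)
    (hTS : ∀ i, ↑(T i) ⊆ S)
    (hTcard : ∀ i, (T i).card = 3)
    (hTsum : ∀ i, (∑ x ∈ T i, x) = w) :
    (∀ i j, i ≠ j → Disjoint (T i) (T j)) ∧
      Module.finrank (ZMod 2)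
        (Submodule.span (ZMod 2)
          {v : Fin n → ZMod 2 |
            ∃ p ∈ ⋃ i, (T i : Set (Fin n → ZMod 2)),
            ∃ q ∈ ⋃ i, (T i : Set (Fin n → ZMod 2)), v = p - q}) ≤ 2 * t := by
  rw [← vectorSpan_eq_span_sub]
  simpa only [Fintype.card_fin] using
    gerbera_disjoint_leaves_and_span_bound_general hS hTinj hTS hTcard hTsum
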